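/- Let α > 0 (with α, β ∈ [0,1]) and let j ∈ ℤ. Let x be the (⊖⊕, j)-jump configuration: x i = false for i < j and x i = true for i ≥ j. Then the iterates F^t δ_x converge on thin cylinders, as t → ∞, to δ_{all-plus}, the Dirac measure at the constant configuration true. -/

import Mathlib

/-!
Started from the jump configuration `J_k` (minus to the left of `k`, plus from `k` on), the only
site whose update is random is `k - 1`, which becomes plus with probability `α`. Hence the kernel
at `J_k` is `α δ_{J_{k-1}} + (1 - α) δ_{J_k}` (`kernel_jump`), and since `F` is linear,
`F^{t+1} δ_{J_k} = α F^t δ_{J_{k-1}} + (1 - α) F^t δ_{J_k}` (`iterate_succ_jump`).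

Fix a thin cylinder on a finite set `S`. If `k` lies to the left of `S`, every `J_l` with `l ≤ k`
agrees with all-plus on `S`, so the mass of the cylinder is constantly the limiting one. If the mass
converges to `c` from `J_{k-1}`, the recursion is a contraction by `1 - α < 1` towards a sequence
tending to `c` (`tendsto_of_relax`), so the mass also converges to `c` from `J_k`. Induction on `k`
reaches every position.
-/

open MeasureTheory Filter

namespace PCA

/-- Configuration space: `true` is ⊕ (plus), `false` is ⊖ (minus). -/
abbrev Config : Type := ℤ → Bool

/-- Transition probabilities of the PCA. -/
def theta (α β : ℝ) : Bool → Bool → ℝ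
  | false, false => 0
  | true,  false => β
  | false, true  => α
  | true,  true  => 1

/-- Thin cylinder determined by a finite set of coordinates and prescribed values. -/
def cyl (S : Finset ℤ) (a : ℤ → Bool) : Set Config := {y | ∀ i ∈ S, y i = a i}

/-- `K` is the update kernel of the PCA: from configuration `x`, all sites update
independently, site `i` becoming plus with probability `theta α β (x i) (x (i+1))`.
This pins down `K x` as the corresponding product of Bernoulli measures, via its
values on thin cylinders. -/
def IsPCAKernel (α β : ℝ) (K : Config → Measure Config) : Prop :=
  (∀ x, IsProbabilityMeasure (K x)) ∧
  ∀ (x : Config) (S : Finset ℤ) (a : ℤ → Bool),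
    K x (cyl S a) =
      ∏ i ∈ S, ENNReal.ofReal
        (if a i then theta α β (x i) (x (i + 1)) else 1 - theta α β (x i) (x (i + 1)))

/-- `F` is the PCA operator with parameters `α, β`: `F μ` is `μ` bound with the
product-Bernoulli update kernel. -/
def IsPCA (α β : ℝ) (F : Measure Config → Measure Config) : Prop :=
  ∃ K : Config → Measure Config, IsPCAKernel α β K ∧
    ∀ (μ : Measure Config) (A : Set Config), MeasurableSet A →
      F μ A = ∫⁻ x, K x A ∂μ

/-- The configuration "all minuses". -/
def allMinus : Config := fun _ => false

/-- The configuration "all pluses". -/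
def allPlus : Config := fun _ => true

/-- Convergence of a sequence of measures to `ν` on all thin cylinders. -/
def TendstoCyl (seq : ℕ → Measure Config) (ν : Measure Config) : Prop :=
  ∀ (S : Finset ℤ) (a : ℤ → Bool),
    Tendsto (fun t => seq t (cyl S a)) atTop (nhds (ν (cyl S a)))

end PCA

namespace PCA

/-- The (⊖⊕, k)-jump configuration: minus strictly to the left of `k`, plus from `k` on. -/
def jump (k : ℤ) : Config := fun i => decide (k ≤ i)

lemma measurableSet_eval (i : ℤ) (b : Bool) : MeasurableSet {y : Config | y i = b} :=
  (measurable_pi_apply i : Measurable fun y : Config => y i) (measurableSet_singleton b)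

lemma measurableSet_cyl (S : Finset ℤ) (a : ℤ → Bool) : MeasurableSet (cyl S a) := by
  have h : cyl S a = ⋂ i ∈ S, {y : Config | y i = a i} := by
    ext y; simp [cyl]
  rw [h]
  exact Finset.measurableSet_biInter S fun i _ => measurableSet_eval i (a i)

lemma kernel_eval {α β : ℝ} {K : Config → Measure Config} (hK : IsPCAKernel α β K)
    (x : Config) (i : ℤ) (b : Bool) :
    K x {y | y i = b} =
      ENNReal.ofReal (if b then theta α β (x i) (x (i + 1))
        else 1 - theta α β (x i) (x (i + 1))) := by
  have h := hK.2 x {i} (fun _ => b)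
  simpa [cyl] using h

/-- From `J_k`, all sites other than `k - 1` are almost surely left unchanged. -/
lemma kernel_jump_ae {α β : ℝ} {K : Config → Measure Config} (hK : IsPCAKernel α β K) (k : ℤ) :
    ∀ᵐ y ∂(K (jump k)), ∀ i : ℤ, i ≠ k - 1 → y i = decide (k ≤ i) := by
  rw [ae_all_iff]
  intro i
  by_cases hi : i = k - 1
  · simp [hi]
  rcases lt_or_ge i k with h | h
  · have h0 := kernel_eval hK (jump k) i true
    have h1 : ¬ k ≤ i := by omega
    have h2 : ¬ k ≤ i + 1 := by omega
    simp only [jump, h1, h2, decide_false, theta, if_true, ENNReal.ofReal_zero] at h0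
    rw [ae_iff]
    refine measure_mono_null ?_ h0
    intro y hy
    simpa [hi, h1] using hy
  · have h0 := kernel_eval hK (jump k) i false
    have h2 : k ≤ i + 1 := by omega
    simp [jump, h, h2, theta] at h0
    rw [ae_iff]
    refine measure_mono_null ?_ h0
    intro y hy
    simpa [hi, h] using hy

/-- A measure whose points in `T` are almost surely equal to `z` restricts on `T` to an atom
at `z`. -/
lemma measure_inter_of_ae_eq {P : Measure Config} {T A : Set Config} {z : Config}
    (h : ∀ᵐ y ∂P, y ∈ T → y = z) (hA : MeasurableSet A) :
    P (A ∩ T) = P T * Measure.dirac z A := by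
  rw [Measure.dirac_apply' _ hA]
  by_cases hz : z ∈ A
  · rw [Set.indicator_of_mem hz, Pi.one_apply, mul_one]
    apply measure_congr
    filter_upwards [h] with y hy
    apply propext
    exact ⟨fun q => q.2, fun q => ⟨by rw [hy q]; exact hz, q⟩⟩
  · rw [Set.indicator_of_notMem hz, mul_zero]
    have h' : ∀ᵐ y ∂P, y ∉ A ∩ T := by
      filter_upwards [h] with y hy q
      exact hz (hy q.2 ▸ q.1)
    simpa [ae_iff] using h'

lemma kernel_jump {α β : ℝ} {K : Config → Measure Config} (hK : IsPCAKernel α β K) (k : ℤ) :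
    K (jump k) = ENNReal.ofReal α • Measure.dirac (jump (k - 1))
      + ENNReal.ofReal (1 - α) • Measure.dirac (jump k) := by
  have ht := kernel_eval hK (jump k) (k - 1) true
  have hf := kernel_eval hK (jump k) (k - 1) false
  simp [jump, theta] at ht hf
  have e1 : ∀ᵐ y ∂(K (jump k)), y ∈ {y : Config | y (k - 1) = true} → y = jump (k - 1) := by
    filter_upwards [kernel_jump_ae hK k] with y hy hT
    funext i
    by_cases hi : i = k - 1
    · subst hi
      simpa [jump] using hT
    · rw [hy i hi]
      simp only [jump, decide_eq_decide]
      omega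
  have e2 : ∀ᵐ y ∂(K (jump k)), y ∈ {y : Config | y (k - 1) = true}ᶜ → y = jump k := by
    filter_upwards [kernel_jump_ae hK k] with y hy hT
    funext i
    by_cases hi : i = k - 1
    · subst hi
      simpa [jump] using hT
    · rw [hy i hi, jump]
  have hc : {y : Config | y (k - 1) = true}ᶜ = {y : Config | y (k - 1) = false} := by
    ext y; simp
  ext A hA
  rw [← measure_inter_add_sdiff A (measurableSet_eval (k - 1) true), Set.sdiff_eq,
    measure_inter_of_ae_eq e1 hA, measure_inter_of_ae_eq e2 hA, hc]
  unfold jump at *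
  rw [ht, hf]
  simp

lemma map_linear {α β : ℝ} {F : Measure Config → Measure Config} (hF : IsPCA α β F)
    (p q : ENNReal) (μ ν : Measure Config) : F (p • μ + q • ν) = p • F μ + q • F ν := by
  obtain ⟨K, -, hFK⟩ := hF
  ext A hA
  simp [hFK _ A hA, lintegral_add_measure, lintegral_smul_measure]

lemma iterate_linear {α β : ℝ} {F : Measure Config → Measure Config} (hF : IsPCA α β F) (t : ℕ)
    (p q : ENNReal) (μ ν : Measure Config) :
    F^[t] (p • μ + q • ν) = p • F^[t] μ + q • F^[t] ν := by
  induction t generalizing μ ν with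
  | zero => rfl
  | succ t ih => rw [Function.iterate_succ_apply, map_linear hF, ih]; rfl

lemma iterate_succ_jump {α β : ℝ} {F : Measure Config → Measure Config} (hF : IsPCA α β F)
    (t : ℕ) (k : ℤ) :
    F^[t + 1] (Measure.dirac (jump k)) =
      ENNReal.ofReal α • F^[t] (Measure.dirac (jump (k - 1)))
        + ENNReal.ofReal (1 - α) • F^[t] (Measure.dirac (jump k)) := by
  have h : F (Measure.dirac (jump k)) = ENNReal.ofReal α • Measure.dirac (jump (k - 1))
      + ENNReal.ofReal (1 - α) • Measure.dirac (jump k) := by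
    obtain ⟨K, hK, hFK⟩ := hF
    ext A hA
    rw [hFK _ A hA, lintegral_dirac, kernel_jump hK]
  rw [Function.iterate_succ_apply, h, iterate_linear hF]

/-- A sequence repeatedly averaged, with a fixed positive weight, with a sequence tending to `c`
tends to `c`. -/
lemma tendsto_of_relax {α c : ℝ} (h0 : 0 < α) (h1 : α ≤ 1) {u v : ℕ → ℝ}
    (hu : ∀ t, u (t + 1) = α * v t + (1 - α) * u t) (hv : Tendsto v atTop (nhds c)) :
    Tendsto u atTop (nhds c) := by
  rw [Metric.tendsto_atTop] at hv ⊢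
  intro ε hε
  obtain ⟨N, hN⟩ := hv (ε / 2) (by linarith)
  have hb : ∀ n, |u (N + n) - c| ≤ ε / 2 + (1 - α) ^ n * |u N - c| := by
    intro n
    induction n with
    | zero => simp; linarith
    | succ n ih =>
      have hvn : |v (N + n) - c| ≤ ε / 2 := (hN (N + n) (by omega)).le
      have e : u (N + (n + 1)) - c = α * (v (N + n) - c) + (1 - α) * (u (N + n) - c) := by
        rw [← add_assoc, hu]; ring
      calc |u (N + (n + 1)) - c|
          ≤ α * |v (N + n) - c| + (1 - α) * |u (N + n) - c| := by
            rw [e]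
            refine (abs_add_le _ _).trans ?_
            rw [abs_mul, abs_mul, abs_of_pos h0, abs_of_nonneg (by linarith : 0 ≤ 1 - α)]
        _ ≤ α * (ε / 2) + (1 - α) * (ε / 2 + (1 - α) ^ n * |u N - c|) := by
            have : 0 ≤ 1 - α := by linarith
            gcongr
        _ = ε / 2 + (1 - α) ^ (n + 1) * |u N - c| := by ring
  have hp : Tendsto (fun n : ℕ => (1 - α) ^ n * |u N - c|) atTop (nhds 0) := by
    simpa using (tendsto_pow_atTop_nhds_zero_of_lt_one (by linarith : 0 ≤ 1 - α)
      (by linarith)).mul_const |u N - c|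
  obtain ⟨M, hM⟩ := eventually_atTop.1 (hp.eventually (gt_mem_nhds (half_pos hε)))
  refine ⟨N + M, fun n hn => ?_⟩
  obtain ⟨m, rfl⟩ := Nat.exists_eq_add_of_le (show N ≤ n by omega)
  have := hb m
  have := hM m (by omega)
  rw [Real.dist_eq]
  linarith

/-- The mass of a set under `F^t δ_{J_k}` is finite and, as a real number, satisfies the averaging
recursion. -/
lemma iterate_real {α β : ℝ} (h0 : 0 < α) (h1 : α ≤ 1) {F : Measure Config → Measure Config}
    (hF : IsPCA α β F) (A : Set Config) (t : ℕ) (k : ℤ) :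
    F^[t] (Measure.dirac (jump k)) A ≠ ⊤ ∧
    (F^[t + 1] (Measure.dirac (jump k)) A).toReal =
      α * (F^[t] (Measure.dirac (jump (k - 1))) A).toReal
        + (1 - α) * (F^[t] (Measure.dirac (jump k)) A).toReal := by
  have fin : ∀ t k, F^[t] (Measure.dirac (jump k)) A ≠ ⊤ := by
    intro t
    induction t with
    | zero => intro k; exact measure_ne_top (Measure.dirac (jump k)) A
    | succ t ih =>
      intro k
      rw [iterate_succ_jump hF]
      simp [ENNReal.mul_eq_top, ih]
  refine ⟨fin t k, ?_⟩
  rw [iterate_succ_jump hF, Measure.add_apply, Measure.smul_apply, Measure.smul_apply,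
    smul_eq_mul, smul_eq_mul, ENNReal.toReal_add
      (ENNReal.mul_ne_top ENNReal.ofReal_ne_top (fin _ _))
      (ENNReal.mul_ne_top ENNReal.ofReal_ne_top (fin _ _)),
    ENNReal.toReal_mul, ENNReal.toReal_mul, ENNReal.toReal_ofReal h0.le,
    ENNReal.toReal_ofReal (by linarith)]

/-- To the left of the sites of the cylinder, the jump configurations give the cylinder the same mass
as all-plus, at every time. -/
lemma iterate_real_of_le {α β : ℝ} (h0 : 0 < α) (h1 : α ≤ 1)
    {F : Measure Config → Measure Config} (hF : IsPCA α β F) (S : Finset ℤ) (a : ℤ → Bool)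
    {L : ℤ} (hL : ∀ i ∈ S, L ≤ i) (t : ℕ) : ∀ k ≤ L,
    (F^[t] (Measure.dirac (jump k)) (cyl S a)).toReal =
      (Measure.dirac allPlus (cyl S a)).toReal := by
  induction t with
  | zero =>
    intro k hk
    have h : jump k ∈ cyl S a ↔ allPlus ∈ cyl S a := by
      refine forall₂_congr fun i hi => ?_
      have : k ≤ i := hk.trans (hL i hi)
      simp [jump, allPlus, this]
    rw [Function.iterate_zero, id, Measure.dirac_apply' _ (measurableSet_cyl S a),
      Measure.dirac_apply' _ (measurableSet_cyl S a)]
    by_cases hp : allPlus ∈ cyl S a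
    · simp [h.2 hp, hp]
    · simp [mt h.1 hp, hp]
  | succ t ih =>
    intro k hk
    rw [(iterate_real h0 h1 hF _ t k).2, ih k hk, ih (k - 1) (by omega)]
    ring

lemma tendsto_real {α β : ℝ} (h0 : 0 < α) (h1 : α ≤ 1)
    {F : Measure Config → Measure Config} (hF : IsPCA α β F) (S : Finset ℤ) (a : ℤ → Bool)
    (j : ℤ) :
    Tendsto (fun t => (F^[t] (Measure.dirac (jump j)) (cyl S a)).toReal) atTop
      (nhds (Measure.dirac allPlus (cyl S a)).toReal) := by
  obtain ⟨L, hL⟩ := S.bddBelow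
  have key : ∀ n : ℕ, Tendsto
      (fun t => (F^[t] (Measure.dirac (jump (min L j + n))) (cyl S a)).toReal) atTop
      (nhds (Measure.dirac allPlus (cyl S a)).toReal) := by
    intro n
    induction n with
    | zero =>
      refine tendsto_const_nhds.congr fun t => ?_
      exact (iterate_real_of_le h0 h1 hF S a (fun i hi => hL hi) t _ (by simp)).symm
    | succ n ih =>
      refine tendsto_of_relax h0 h1 (fun t => ?_) ih
      have h := (iterate_real h0 h1 hF (cyl S a) t (min L j + (n + 1 : ℕ))).2
      rwa [show min L j + ((n + 1 : ℕ) : ℤ) - 1 = min L j + n by push_cast; ring] at h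
  have h := key (j - min L j).toNat
  rwa [show min L j + ((j - min L j).toNat : ℤ) = j by omega] at h

end PCA

/-- if `α > 0` and `x` is the `(⊖⊕, j)`-jump configuration, then
`F^t δ_x` converges on thin cylinders to `δ_allPlus`. -/
theorem pca_minusplus_jump_to_all_plus (α β : ℝ)
    (hα0 : 0 < α) (hα1 : α ≤ 1) (hβ0 : 0 ≤ β) (hβ1 : β ≤ 1)
    (F : Measure PCA.Config → Measure PCA.Config) (hF : PCA.IsPCA α β F)
    (j : ℤ) :
    PCA.TendstoCyl (fun t => F^[t] (Measure.dirac (fun i => decide (j ≤ i))))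
      (Measure.dirac PCA.allPlus) := by
  intro S a
  exact (ENNReal.tendsto_toReal_iff
    (fun t => (PCA.iterate_real hα0 hα1 hF (PCA.cyl S a) t j).1) (measure_ne_top _ _)).1
    (PCA.tendsto_real hα0 hα1 hF S a j)
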